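/- arXiv:2601.10706 — 5 statements merged into one kernel-verified Lean document; each statement's English description precedes it below -/
import Mathlib

section
/- Let T be a tree on N ≥ 2 vertices in which every vertex has degree at most 3, and let M be a maximal mergeable matching in T, i.e., a matching all of whose edges are mergeable and such that every mergeable edge of T shares an endpoint with some edge of M. Then 6·|M| ≥ N. (Equivalently, contracting the edges of M leaves at most (5/6)·N clusters, so each round of topology-tree contraction reduces the number of clusters by a factor of at least 5/6.) -/
open SimpleGraph Finset


section helpers
variable {V : Type*} [Fintype V] [DecidableEq V] (G : SimpleGraph V) [DecidableRel G.Adj]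

/-- six divided by the degree -/
def qw (v : V) : ℤ := 6 / (G.degree v : ℤ)

/-- the charge of the ordered pair -/
def cw (u v : V) : ℤ := if G.Adj u v then max 0 (qw G u + qw G v - 5) else 0

lemma cw_nonneg (u v : V) : 0 ≤ cw G u v := by
  unfold cw; split_ifs <;> simp

lemma cw_comm (u v : V) : cw G u v = cw G v u := by
  unfold cw; simp only [G.adj_comm u v, add_comm (qw G u)]

lemma closed_card (hc : G.Connected) (S : Finset V) (a : V) (ha : a ∈ S)
    (h : ∀ x ∈ S, ∀ y, G.Adj x y → y ∈ S) : Fintype.card V ≤ S.card := by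
  have key : ∀ x y : V, G.Walk x y → x ∈ S → y ∈ S := by
    intro x y p
    induction p with
    | nil => exact id
    | cons hadj _ ih => exact fun hx => ih (h _ hx _ hadj)
  have : S = Finset.univ := by
    ext y
    simp only [Finset.mem_univ, iff_true]
    obtain ⟨p⟩ := hc.preconnected a y
    exact key a y p ha
  rw [this, Finset.card_univ]

lemma sum_cw (a b : V) (hab : G.Adj a b) :
    ∑ x, cw G a x = cw G a b + ∑ x ∈ (G.neighborFinset a).erase b, cw G a x := by
  rw [Finset.add_sum_erase _ _ (by simpa using hab)]
  symm
  apply Finset.sum_subset (Finset.subset_univ _)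
  intro x _ hx
  have : ¬ G.Adj a x := by simpa using hx
  simp [cw, this]

lemma total (hT : G.IsTree) (hpos : ∀ v, 1 ≤ G.degree v) (hdeg : ∀ v : V, G.degree v ≤ 3) :
    2 * (Fintype.card V : ℤ) + 10 ≤ ∑ u, ∑ v, cw G u v := by
  have hE := hT.card_edgeFinset
  have hS := G.sum_degrees_eq_twice_card_edges
  have hq : ∀ v, (G.degree v : ℤ) * qw G v = 6 := by
    intro v
    have h1 := hpos v
    have h2 := hdeg v
    unfold qw
    interval_cases G.degree v <;> norm_num
  have h1 : ∑ u, ∑ v, (if G.Adj u v then qw G u + qw G v - 5 else 0) ≤ ∑ u, ∑ v, cw G u v := by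
    refine Finset.sum_le_sum fun u _ => Finset.sum_le_sum fun v _ => ?_
    unfold cw
    split_ifs <;> simp
  have h2 : ∑ u, ∑ v, (if G.Adj u v then qw G u else 0) = 6 * (Fintype.card V : ℤ) := by
    have : ∀ u, ∑ v, (if G.Adj u v then qw G u else 0) = 6 := by
      intro u
      rw [← hq u, ← Finset.sum_filter, Finset.sum_const, ← G.card_neighborFinset_eq_degree,
        G.neighborFinset_eq_filter]
      simp
    simp [this, mul_comm]
  have h3 : ∑ u, ∑ v, (if G.Adj u v then qw G v else 0) = 6 * (Fintype.card V : ℤ) := by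
    rw [Finset.sum_comm, ← h2]
    simp only [G.adj_comm]
  have h4 : ∑ u, ∑ v, (if G.Adj u v then (5 : ℤ) else 0) = 5 * (2 * (G.edgeFinset.card : ℤ)) := by
    have : ∀ u, ∑ v, (if G.Adj u v then (5 : ℤ) else 0) = 5 * (G.degree u : ℤ) := by
      intro u
      rw [← Finset.sum_filter, Finset.sum_const, ← G.card_neighborFinset_eq_degree,
        G.neighborFinset_eq_filter]
      simp [mul_comm]
    simp only [this]
    rw [← Finset.mul_sum]
    congr 1
    exact_mod_cast hS
  have h5 : ∑ u, ∑ v, (if G.Adj u v then qw G u + qw G v - 5 else 0) =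
      ∑ u, ∑ v, (if G.Adj u v then qw G u else 0) + ∑ u, ∑ v, (if G.Adj u v then qw G v else 0)
      - ∑ u, ∑ v, (if G.Adj u v then (5 : ℤ) else 0) := by
    simp only [← Finset.sum_add_distrib, ← Finset.sum_sub_distrib]
    refine Finset.sum_congr rfl fun u _ => Finset.sum_congr rfl fun v _ => ?_
    split_ifs <;> simp
  rw [h5, h2, h3, h4] at h1
  have : (G.edgeFinset.card : ℤ) + 1 = Fintype.card V := by exact_mod_cast hE
  linarith

lemma qw_one {v : V} (h : G.degree v = 1) : qw G v = 6 := by simp [qw, h]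
lemma qw_two {v : V} (h : G.degree v = 2) : qw G v = 3 := by simp [qw, h]
lemma qw_three {v : V} (h : G.degree v = 3) : qw G v = 2 := by simp [qw, h]

lemma qw_le {v : V} (hpos : ∀ v, 1 ≤ G.degree v) (hdeg : ∀ v : V, G.degree v ≤ 3) :
    G.degree v = 1 ∨ qw G v ≤ 3 := by
  have h1 := hpos v
  have h2 := hdeg v
  unfold qw
  interval_cases G.degree v <;> norm_num

lemma nbr_one {a b : V} (hab : G.Adj a b) (h : G.degree a = 1) :
    (G.neighborFinset a).erase b = ∅ := by
  rw [← Finset.card_eq_zero, Finset.card_erase_of_mem (by simpa using hab),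
    G.card_neighborFinset_eq_degree, h]

lemma nbr_two {a b : V} (hab : G.Adj a b) (h : G.degree a = 2) :
    ∃ c, (G.neighborFinset a).erase b = {c} := by
  rw [← Finset.card_eq_one, Finset.card_erase_of_mem (by simpa using hab),
    G.card_neighborFinset_eq_degree, h]

lemma nbr_three {a b : V} (hab : G.Adj a b) (h : G.degree a = 3) :
    ∃ c d, c ≠ d ∧ (G.neighborFinset a).erase b = {c, d} := by
  rw [← Finset.card_eq_two, Finset.card_erase_of_mem (by simpa using hab),
    G.card_neighborFinset_eq_degree, h]

lemma adj_one {a b : V} (hab : G.Adj a b) (h : G.degree a = 1) : ∀ y, G.Adj a y → y = b := by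
  intro y hy
  by_contra hne
  have : y ∈ (G.neighborFinset a).erase b := by simp [hne, hy]
  simp [nbr_one G hab h] at this

lemma local_bound (hc : G.Connected) (hpos : ∀ v, 1 ≤ G.degree v) (hdeg : ∀ v : V, G.degree v ≤ 3)
    (hN : 7 ≤ Fintype.card V) (a b : V) (hab : G.Adj a b)
    (h : (G.degree a = 1 ∧ G.degree b = 1) ∨ (G.degree a = 1 ∧ G.degree b = 2) ∨
      (G.degree a = 2 ∧ G.degree b = 2) ∨ (G.degree a = 1 ∧ G.degree b = 3)) :
    ∑ x, cw G a x + ∑ x, cw G b x - cw G a b ≤ 6 := by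
  rw [sum_cw G a b hab, sum_cw G b a hab.symm, cw_comm G b a]
  rcases h with ⟨ha, hb⟩ | ⟨ha, hb⟩ | ⟨ha, hb⟩ | ⟨ha, hb⟩
  · exfalso
    have := closed_card G hc {a, b} a (by simp) (by
      have h1 := adj_one G hab ha
      have h2 := adj_one G hab.symm hb
      intro x hx y hy
      simp only [Finset.mem_insert, Finset.mem_singleton] at hx ⊢
      grind)
    have := Finset.card_le_two (a := a) (b := b)
    omega
  · obtain ⟨c, hbc⟩ := nbr_two G hab.symm hb
    have hB : ∀ y, G.Adj b y ↔ y = a ∨ y = c := by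
      intro y
      have := congrArg (y ∈ ·) hbc
      simp at this
      grind [hab.symm]
    have hadj : G.Adj b c := (hB c).2 (Or.inr rfl)
    rw [nbr_one G hab ha, hbc]
    simp only [Finset.sum_empty, Finset.sum_singleton, cw, hab, hadj, if_true, qw_one G ha,
      qw_two G hb]
    rcases qw_le (v := c) G hpos hdeg with hc1 | hc1
    · exfalso
      have := closed_card G hc {a, b, c} a (by simp) (by
        have h1 := adj_one G hab ha
        have h2 := adj_one G hadj.symm hc1
        intro x hx y hy
        simp only [Finset.mem_insert, Finset.mem_singleton] at hx ⊢
        grind)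
      have := Finset.card_le_three (a := a) (b := b) (c := c)
      omega
    · omega
  · obtain ⟨c, hbc⟩ := nbr_two G hab.symm hb
    obtain ⟨d, had⟩ := nbr_two G hab ha
    have hB : ∀ y, G.Adj b y ↔ y = a ∨ y = c := by
      intro y
      have := congrArg (y ∈ ·) hbc
      simp at this
      grind [hab.symm]
    have hA : ∀ y, G.Adj a y ↔ y = b ∨ y = d := by
      intro y
      have := congrArg (y ∈ ·) had
      simp at this
      grind
    have hadj : G.Adj b c := (hB c).2 (Or.inr rfl)
    have hadj2 : G.Adj a d := (hA d).2 (Or.inr rfl)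
    rw [had, hbc]
    simp only [Finset.sum_singleton, cw, hab, hadj, hadj2, if_true, qw_two G ha,
      qw_two G hb]
    rcases qw_le (v := c) G hpos hdeg with hc1 | hc1
    · rcases qw_le (v := d) G hpos hdeg with hd1 | hd1
      · exfalso
        have := closed_card G hc {a, b, c, d} a (by simp) (by
          have h1 := adj_one G hadj2.symm hd1
          have h2 := adj_one G hadj.symm hc1
          intro x hx y hy
          simp only [Finset.mem_insert, Finset.mem_singleton] at hx ⊢
          grind)
        have := Finset.card_le_four (a := a) (b := b) (c := c) (d := d)
        omega
      · rw [qw_one G hc1]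
        omega
    · rcases qw_le (v := d) G hpos hdeg with hd1 | hd1
      · rw [qw_one G hd1]
        omega
      · omega
  · obtain ⟨c, d, hcd, hbc⟩ := nbr_three G hab.symm hb
    have hB : ∀ y, G.Adj b y ↔ y = a ∨ y = c ∨ y = d := by
      intro y
      have := congrArg (y ∈ ·) hbc
      simp at this
      grind [hab.symm]
    have hadj : G.Adj b c := (hB c).2 (by simp)
    have hadj2 : G.Adj b d := (hB d).2 (by simp)
    rw [nbr_one G hab ha, hbc, Finset.sum_pair hcd]
    simp only [Finset.sum_empty, cw, hab, hadj, hadj2, if_true, qw_one G ha,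
      qw_three G hb]
    rcases qw_le (v := c) G hpos hdeg with hc1 | hc1
    · rcases qw_le (v := d) G hpos hdeg with hd1 | hd1
      · exfalso
        have := closed_card G hc {a, b, c, d} a (by simp) (by
          have h1 := adj_one G hadj2.symm hd1
          have h2 := adj_one G hadj.symm hc1
          have h3 := adj_one G hab ha
          intro x hx y hy
          simp only [Finset.mem_insert, Finset.mem_singleton] at hx ⊢
          grind)
        have := Finset.card_le_four (a := a) (b := b) (c := c) (d := d)
        omega
      · rw [qw_one G hc1]
        omega
    · rcases qw_le (v := d) G hpos hdeg with hd1 | hd1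
      · rw [qw_one G hd1]
        omega
      · omega

lemma pair_eq {a b c d : ℕ} (h : ({a, b} : Multiset ℕ) = {c, d}) :
    (a = c ∧ b = d) ∨ (a = d ∧ b = c) := by
  have h' : (([a, b] : List ℕ) : Multiset ℕ) = ([c, d] : List ℕ) := h
  rw [Multiset.coe_eq_coe] at h'
  have h1 := h'.mem_iff (a := a)
  have h2 := h'.mem_iff (a := b)
  have h3 := h'.mem_iff (a := c)
  have h4 := h'.mem_iff (a := d)
  simp at h1 h2 h3 h4
  omega

lemma merge_cases {p q : ℕ}
    (hm : ({p, q} : Multiset ℕ) ∈ ({{1, 1}, {1, 2}, {2, 2}, {1, 3}} : Set (Multiset ℕ))) :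
    ((p = 1 ∧ q = 1) ∨ (p = 1 ∧ q = 2) ∨ (p = 2 ∧ q = 2) ∨ (p = 1 ∧ q = 3)) ∨
    ((q = 1 ∧ p = 1) ∨ (q = 1 ∧ p = 2) ∨ (q = 2 ∧ p = 2) ∨ (q = 1 ∧ p = 3)) := by
  simp only [Set.mem_insert_iff, Set.mem_singleton_iff] at hm
  rcases hm with h | h | h | h <;> have := pair_eq h <;> clear h <;> omega

lemma pos_mergeable (hpos : ∀ v, 1 ≤ G.degree v) (hdeg : ∀ v : V, G.degree v ≤ 3) (u v : V)
    (h : 0 < cw G u v) : G.Adj u v ∧ ({G.degree u, G.degree v} : Multiset ℕ) ∈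
        ({{1, 1}, {1, 2}, {2, 2}, {1, 3}} : Set (Multiset ℕ)) := by
  unfold cw at h
  split_ifs at h with hadj
  · refine ⟨hadj, ?_⟩
    have h1 := hpos u
    have h2 := hdeg u
    have h3 := hpos v
    have h4 := hdeg v
    unfold qw at h
    interval_cases G.degree u <;> interval_cases G.degree v <;>
      first
      | (exfalso; revert h; norm_num; done)
      | (simp only [Set.mem_insert_iff, Set.mem_singleton_iff]; decide)
  · simp at h

end helpers

/-- Let `T` be a tree on `N ≥ 2` vertices in which every vertex has degree
at most 3, and let `M` be a maximal mergeable matching in `T` (a matching all of whose edges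
are mergeable, such that every mergeable edge shares an endpoint with an edge of `M`).
Then `6 * |M| ≥ N`. An edge `{u,v}` is mergeable iff the unordered pair of degrees
`{deg u, deg v}` is one of `{1,1}, {1,2}, {2,2}, {1,3}`. -/
theorem stmt0 {V : Type*} [Fintype V] [DecidableEq V]
    (G : SimpleGraph V) [DecidableRel G.Adj]
    (hT : G.IsTree) (hN : 2 ≤ Fintype.card V)
    (hdeg : ∀ v : V, G.degree v ≤ 3)
    (M : Finset (Sym2 V))
    (hME : ↑M ⊆ G.edgeSet)
    (hmatch : ∀ e ∈ M, ∀ f ∈ M, e ≠ f → ∀ v : V, v ∈ e → v ∉ f)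
    (hmerge : ∀ e ∈ M, ∃ u v : V, e = s(u, v) ∧
      ({G.degree u, G.degree v} : Multiset ℕ) ∈
        ({{1, 1}, {1, 2}, {2, 2}, {1, 3}} : Set (Multiset ℕ)))
    (hmax : ∀ u v : V, G.Adj u v →
      ({G.degree u, G.degree v} : Multiset ℕ) ∈
        ({{1, 1}, {1, 2}, {2, 2}, {1, 3}} : Set (Multiset ℕ)) →
      ∃ e ∈ M, u ∈ e ∨ v ∈ e) :
    Fintype.card V ≤ 6 * M.card := by
  classical
  have hc : G.Connected := hT.connected
  have : Nontrivial V := Fintype.one_lt_card_iff_nontrivial.1 (by omega)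
  have hpos : ∀ v, 1 ≤ G.degree v := fun v => hc.preconnected.degree_pos_of_nontrivial v
  have htot := total G hT hpos hdeg
  -- contribution of a matching edge
  let S : Sym2 V → ℤ := fun f => ∑ u, ∑ v, (if u ∈ f ∨ v ∈ f then cw G u v else 0)
  have hsum : ∑ u, ∑ v, cw G u v ≤ ∑ f ∈ M, S f := by
    have : ∑ f ∈ M, S f = ∑ u, ∑ v, ∑ f ∈ M, (if u ∈ f ∨ v ∈ f then cw G u v else 0) := by
      simp only [S]
      rw [Finset.sum_comm]
      refine Finset.sum_congr rfl fun u _ => ?_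
      rw [Finset.sum_comm]
    rw [this]
    refine Finset.sum_le_sum fun u _ => Finset.sum_le_sum fun v _ => ?_
    have hnn : ∀ f ∈ M, 0 ≤ (if u ∈ f ∨ v ∈ f then cw G u v else 0) := by
      intro f _
      split_ifs
      · exact cw_nonneg G u v
      · exact le_rfl
    rcases (cw_nonneg G u v).eq_or_lt with h0 | h0
    · rw [← h0]; exact Finset.sum_nonneg (by rw [← h0] at hnn; exact hnn)
    · obtain ⟨hadj, hm⟩ := pos_mergeable G hpos hdeg u v h0
      obtain ⟨e, he, hue⟩ := hmax u v hadj hm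
      calc cw G u v = (if u ∈ e ∨ v ∈ e then cw G u v else 0) := by rw [if_pos hue]
        _ ≤ _ := Finset.single_le_sum hnn he
  by_cases hN7 : 7 ≤ Fintype.card V
  · have hS : ∀ f ∈ M, S f ≤ 12 := by
      intro f hf
      obtain ⟨a, b, rfl, hm⟩ := hmerge f hf
      have hab : G.Adj a b := hME hf
      have hloc : ∑ x, cw G a x + ∑ x, cw G b x - cw G a b ≤ 6 := by
        have hm' := merge_cases hm
        rcases hm' with h | h
        · exact local_bound G hc hpos hdeg hN7 a b hab h
        · have := local_bound G hc hpos hdeg hN7 b a hab.symm h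
          rw [cw_comm G b a] at this
          linarith
      have hpt : ∀ u v, (if u ∈ s(a, b) ∨ v ∈ s(a, b) then cw G u v else 0) ≤
          (if u = a then cw G u v else 0) + (if u = b then cw G u v else 0)
          + (if v = a then cw G u v else 0) + (if v = b then cw G u v else 0)
          - (if u = a then (if v = b then cw G u v else 0) else 0)
          - (if u = b then (if v = a then cw G u v else 0) else 0) := by
        intro u v
        have h0 := cw_nonneg G u v
        have hne := hab.ne
        have haa : cw G a a = 0 := by simp [cw]
        have hbb : cw G b b = 0 := by simp [cw]
        simp only [Sym2.mem_iff]
        grind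
      have : S s(a, b) ≤ 2 * (∑ x, cw G a x + ∑ x, cw G b x - cw G a b) := by
        refine (Finset.sum_le_sum fun u _ => Finset.sum_le_sum fun v _ => hpt u v).trans ?_
        simp only [Finset.sum_add_distrib, Finset.sum_sub_distrib]
        have e1 : ∀ a : V, ∑ u, ∑ v, (if u = a then cw G u v else 0) = ∑ x, cw G a x := by
          intro a
          rw [Finset.sum_comm]
          simp
        have e2 : ∀ a : V, ∑ u, ∑ v, (if v = a then cw G u v else 0) = ∑ x, cw G a x := by
          intro a
          simp [cw_comm G _ a]
        have e3 : ∀ a b : V, ∑ u, ∑ v, (if u = a then (if v = b then cw G u v else 0) else 0)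
            = cw G a b := by
          intro a b
          rw [Finset.sum_comm]
          simp
        rw [e1, e1, e2, e2, e3, e3, cw_comm G b a]
        linarith
      linarith
    have := Finset.sum_le_card_nsmul M S 12 hS
    simp only [nsmul_eq_mul] at this
    have : (Fintype.card V : ℤ) ≤ 6 * M.card := by linarith
    exact_mod_cast this
  · have : M.card ≠ 0 := by
      intro h
      rw [Finset.card_eq_zero] at h
      rw [h, Finset.sum_empty] at hsum
      omega
    omega
end

section
/- Let T be a tree on N ≥ 2 vertices and let P be a maximal UFO clustering of T. Then 6·|P| ≤ 5·N, i.e., P has at most (5/6)·N blocks. (Equivalently, each round of UFO-tree contraction reduces the number of clusters by a factor of at least 5/6.) -/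
open SimpleGraph Finset

lemma leaf_unique {V : Type*} [Fintype V] [DecidableEq V]
    (G : SimpleGraph V) [DecidableRel G.Adj] {v a b : V} (hd : G.degree v ≤ 1)
    (ha : G.Adj v a) (hb : G.Adj v b) : a = b := by
  rw [← G.card_neighborFinset_eq_degree] at hd
  exact Finset.card_le_one.1 hd a (by simpa using ha) b (by simpa using hb)

lemma low_two {V : Type*} [Fintype V] [DecidableEq V]
    (G : SimpleGraph V) [DecidableRel G.Adj] {v a b c : V} (hd : G.degree v ≤ 2)
    (ha : G.Adj v a) (hb : G.Adj v b) (hab : a ≠ b) (hc : G.Adj v c) : c = a ∨ c = b := by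
  by_contra hcon
  push Not at hcon
  have hsub : ({a, b, c} : Finset V) ⊆ G.neighborFinset v := by
    intro x hx
    simp only [Finset.mem_insert, Finset.mem_singleton] at hx
    rcases hx with rfl | rfl | rfl <;> simpa
  have h := Finset.card_le_card hsub
  rw [G.card_neighborFinset_eq_degree,
    Finset.card_eq_three.2 ⟨a, b, c, hab, hcon.1.symm, hcon.2.symm, rfl⟩] at h
  omega

lemma closed_univ {V : Type*} (G : SimpleGraph V) (hG : G.Connected) (W : Set V) (x : V)
    (hx : x ∈ W) (hcl : ∀ a ∈ W, ∀ b, G.Adj a b → b ∈ W) (y : V) : y ∈ W := by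
  obtain ⟨p⟩ := hG.preconnected x y
  induction p with
  | nil => exact hx
  | cons h p ih => exact ih (hcl _ hx _ h)

/-- The independent set `R` sends all its edges to the complement. -/
lemma indep_count {V : Type*} [Fintype V] [DecidableEq V]
    (G : SimpleGraph V) [DecidableRel G.Adj] (R M : Finset V)
    (hMR : Disjoint M R)
    (hind : ∀ u ∈ R, ∀ v ∈ R, ¬ G.Adj u v)
    (hM : ∀ u ∈ M, ∃ v ∈ M, G.Adj u v) :
    2 * ∑ v ∈ R, G.degree v + M.card ≤ ∑ v, G.degree v := by
  have h1 : ∑ v ∈ R, G.degree v = ∑ u ∈ Rᶜ, #{v ∈ R | G.Adj u v} := by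
    have h := Finset.sum_card_bipartiteAbove_eq_sum_card_bipartiteBelow
      (s := R) (t := Rᶜ) (fun a b => G.Adj b a)
    simp only [Finset.bipartiteAbove, Finset.bipartiteBelow] at h
    rw [← h]
    refine Finset.sum_congr rfl fun v hv => ?_
    rw [← G.card_neighborFinset_eq_degree]
    congr 1
    ext x
    simp only [mem_neighborFinset, Finset.mem_filter, Finset.mem_compl]
    exact ⟨fun hx => ⟨fun hxR => hind v hv x hxR hx, hx.symm⟩, fun hx => hx.2.symm⟩
  have h2 : ∑ u ∈ Rᶜ, (#{v ∈ R | G.Adj u v} + if u ∈ M then 1 else 0) ≤ ∑ u ∈ Rᶜ, G.degree u := by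
    refine Finset.sum_le_sum fun u hu => ?_
    rw [← G.card_neighborFinset_eq_degree]
    split_ifs with huM
    · obtain ⟨w, hw, huw⟩ := hM u huM
      have hwR : w ∉ R := Finset.disjoint_left.1 hMR hw
      rw [← Finset.card_insert_of_notMem (a := w) (by simp [hwR])]
      refine Finset.card_le_card fun x hx => ?_
      simp only [Finset.mem_insert, Finset.mem_filter] at hx
      rcases hx with rfl | hx <;> simp [*]
    · refine Finset.card_le_card fun x hx => ?_
      simp only [Finset.mem_filter] at hx
      simp [*]
  rw [Finset.sum_add_distrib, ← h1] at h2
  have h3 : (∑ u ∈ Rᶜ, if u ∈ M then 1 else 0) = M.card := by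
    rw [← Finset.card_filter]
    congr 1
    ext x
    simp only [Finset.mem_filter, Finset.mem_compl]
    exact ⟨fun h => h.2, fun h => ⟨Finset.disjoint_left.1 hMR h, h⟩⟩
  have h4 := Finset.sum_add_sum_compl R (fun v => G.degree v)
  omega

set_option maxHeartbeats 2000000 in
/-- Let `T` be a tree on `N ≥ 2` vertices and `P` a maximal UFO clustering
of `T` (a partition whose blocks are singletons, adjacent pairs of vertices of degree ≤ 2,
or a vertex of degree ≥ 3 together with a nonempty set of its degree-1 neighbors; maximal
means every vertex of degree ≥ 3 with a degree-1 neighbor lies in one block with all of its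
degree-1 neighbors, and no edge with both endpoints of degree ≤ 2 has both endpoints in
singleton blocks). Then `6 * |P| ≤ 5 * N`. -/
theorem stmt1 {V : Type*} [Fintype V] [DecidableEq V]
    (G : SimpleGraph V) [DecidableRel G.Adj]
    (hT : G.IsTree) (hN : 2 ≤ Fintype.card V)
    (P : Finpartition (Finset.univ : Finset V))
    (hblocks : ∀ b ∈ P.parts,
      (∃ v : V, b = {v}) ∨
      (∃ u v : V, u ≠ v ∧ G.Adj u v ∧ G.degree u ≤ 2 ∧ G.degree v ≤ 2 ∧ b = {u, v}) ∨
      (∃ (v : V) (S : Finset V), S.Nonempty ∧ v ∉ S ∧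
        (∀ u ∈ S, G.Adj v u ∧ G.degree u = 1) ∧ 3 ≤ G.degree v ∧ b = insert v S))
    (hmax1 : ∀ v : V, 3 ≤ G.degree v → (∃ u : V, G.Adj v u ∧ G.degree u = 1) →
      ∃ b ∈ P.parts, v ∈ b ∧ ∀ u : V, G.Adj v u → G.degree u = 1 → u ∈ b)
    (hmax2 : ¬ ∃ u v : V, G.Adj u v ∧ G.degree u ≤ 2 ∧ G.degree v ≤ 2 ∧
      ({u} : Finset V) ∈ P.parts ∧ ({v} : Finset V) ∈ P.parts) :
    6 * P.parts.card ≤ 5 * Fintype.card V := by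
  classical
  -- basic facts
  have hnt : Nontrivial V := Fintype.one_lt_card_iff_nontrivial.1 (by omega)
  have hdeg : ∀ v, 1 ≤ G.degree v := fun v => hT.1.preconnected.degree_pos_of_nontrivial v
  have hE : ∑ v, G.degree v + 2 = 2 * Fintype.card V := by
    have h1 := G.sum_degrees_eq_twice_card_edges
    have h2 := hT.card_edgeFinset
    omega
  have huniq : ∀ b ∈ P.parts, ∀ c ∈ P.parts, ∀ x, x ∈ b → x ∈ c → b = c := by
    intro b hb c hc x hxb hxc
    exact P.eq_of_mem_parts hb hc hxb hxc
  set P2 := P.parts.filter (fun b => ∃ u v : V, u ≠ v ∧ G.Adj u v ∧ G.degree u ≤ 2 ∧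
    G.degree v ≤ 2 ∧ b = {u, v}) with hP2
  set M := P2.biUnion id with hMdef
  have hMcard : M.card = 2 * P2.card := by
    rw [hMdef, Finset.card_biUnion]
    · rw [Finset.sum_const_nat (m := 2), mul_comm]
      intro b hb
      obtain ⟨-, u, v, huv, -, -, -, rfl⟩ := Finset.mem_filter.1 hb
      exact Finset.card_pair huv
    · intro b hb c hc hbc
      exact P.disjoint (Finset.mem_filter.1 hb).1 (Finset.mem_filter.1 hc).1 hbc
  have hMlow : ∀ x ∈ M, G.degree x ≤ 2 ∧ ∃ y ∈ M, G.degree y ≤ 2 ∧ G.Adj x y ∧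
      ({x, y} : Finset V) ∈ P2 := by
    intro x hx
    obtain ⟨b, hb, hxb⟩ := Finset.mem_biUnion.1 hx
    obtain ⟨hbP, u, v, huv, hadj, hu, hv, rfl⟩ := Finset.mem_filter.1 hb
    have huM : u ∈ M := Finset.mem_biUnion.2 ⟨_, hb, by simp⟩
    have hvM : v ∈ M := Finset.mem_biUnion.2 ⟨_, hb, by simp⟩
    simp only [id, Finset.mem_insert, Finset.mem_singleton] at hxb
    rcases hxb with rfl | rfl
    · exact ⟨hu, v, hvM, hv, hadj, hb⟩
    · exact ⟨hv, u, huM, hu, hadj.symm, by rwa [Finset.pair_comm]⟩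
  set B := Finset.univ.filter (fun v => 3 ≤ G.degree v) with hB
  set A := Finset.univ.filter (fun v => G.degree v = 1 ∧ ∃ u, G.Adj v u ∧ 3 ≤ G.degree u) with hA
  set R := Finset.univ.filter (fun v => G.degree v ≤ 2 ∧ v ∉ M) with hR
  set Q := Finset.univ.filter (fun v => G.degree v = 1 ∧ v ∉ A) with hQ
  have hMR : Disjoint M R := by
    rw [Finset.disjoint_left]; intro x hx hxR; exact (Finset.mem_filter.1 hxR).2.2 hx
  have hAR : A ⊆ R := by
    intro x hx
    obtain ⟨-, hx1, u, hxu, hu⟩ := Finset.mem_filter.1 hx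
    refine Finset.mem_filter.2 ⟨Finset.mem_univ _, by omega, fun hxM => ?_⟩
    obtain ⟨-, y, -, hy2, hxy, -⟩ := hMlow x hxM
    have := leaf_unique G (by omega) hxu hxy
    subst this
    omega
  have hSsing : ∀ x ∈ R, x ∉ A → ({x} : Finset V) ∈ P.parts := by
    intro x hx hxA
    obtain ⟨-, hx2, hxM⟩ := Finset.mem_filter.1 hx
    have hb : P.part x ∈ P.parts := P.part_mem.2 (Finset.mem_univ x)
    have hxb : x ∈ P.part x := P.mem_part (Finset.mem_univ x)
    rcases hblocks _ hb with ⟨v, hv⟩ | h | ⟨v, S, hS, hvS, hSv, hv3, hbv⟩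
    · rw [hv] at hxb hb
      rw [Finset.mem_singleton.1 hxb]; exact hb
    · exact absurd (Finset.mem_biUnion.2 ⟨_, Finset.mem_filter.2 ⟨hb, h⟩, hxb⟩) hxM
    · rw [hbv] at hxb
      rcases Finset.mem_insert.1 hxb with rfl | hxS
      · omega
      · exact absurd (Finset.mem_filter.2 ⟨Finset.mem_univ _, (hSv x hxS).2, v,
          (hSv x hxS).1.symm, hv3⟩) hxA
  have hAnbr : ∀ x ∈ A, ∀ y, G.Adj x y → 3 ≤ G.degree y := by
    intro x hx y hxy
    obtain ⟨-, hx1, u, hxu, hu⟩ := Finset.mem_filter.1 hx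
    rwa [leaf_unique G (by omega) hxy hxu]
  have hind : ∀ u ∈ R, ∀ v ∈ R, ¬ G.Adj u v := by
    intro u hu v hv huv
    have hu2 := (Finset.mem_filter.1 hu).2.1
    have hv2 := (Finset.mem_filter.1 hv).2.1
    by_cases huA : u ∈ A
    · have := hAnbr u huA v huv; omega
    by_cases hvA : v ∈ A
    · have := hAnbr v hvA u huv.symm; omega
    exact hmax2 ⟨u, v, huv, hu2, hv2, hSsing u hu huA, hSsing v hv hvA⟩
  have hI := indep_count G R M hMR hind (fun u hu => by
    obtain ⟨-, y, hy, -, hxy, -⟩ := hMlow u hu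
    exact ⟨y, hy, hxy⟩)
  -- vertex count
  have hcount : Fintype.card V = B.card + R.card + M.card := by
    have h1 : Finset.univ = (B ∪ R) ∪ M := by
      ext x
      simp only [hB, hR, Finset.mem_union, Finset.mem_filter, Finset.mem_univ, true_and, true_iff]
      by_cases hx : x ∈ M
      · exact Or.inr hx
      · left
        by_cases h3 : 3 ≤ G.degree x
        · exact Or.inl h3
        · exact Or.inr ⟨by omega, hx⟩
    have hBR : Disjoint B R := by
      rw [Finset.disjoint_left]; intro x hx hxR
      have h1 := (Finset.mem_filter.1 hx).2
      have h2 := (Finset.mem_filter.1 hxR).2.1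
      omega
    have hBM : Disjoint B M := by
      rw [Finset.disjoint_left]; intro x hx hxR
      have h1 := (Finset.mem_filter.1 hx).2
      have h2 := (hMlow x hxR).1
      omega
    rw [← Finset.card_univ, h1, Finset.card_union_of_disjoint, Finset.card_union_of_disjoint hBR]
    exact Finset.disjoint_union_left.2 ⟨hBM, hMR.symm⟩
  -- degree sum over R
  have hRdeg : 2 * R.card ≤ ∑ v ∈ R, G.degree v + A.card + Q.card := by
    have h1 : ∑ v ∈ R, 2 ≤ ∑ v ∈ R, (G.degree v + (if v ∈ A then 1 else 0) +
        (if v ∈ Q then 1 else 0)) := by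
      refine Finset.sum_le_sum fun v hv => ?_
      have h0 := hdeg v
      by_cases h : G.degree v = 1
      · by_cases hvA : v ∈ A
        · simp [hvA]; omega
        · have : v ∈ Q := Finset.mem_filter.2 ⟨Finset.mem_univ _, h, hvA⟩
          simp [this]; omega
      · omega
    simp only [Finset.sum_add_distrib, Finset.sum_const, smul_eq_mul] at h1
    rw [← Finset.card_filter, ← Finset.card_filter] at h1
    have h2 : (R.filter (· ∈ A)).card ≤ A.card :=
      Finset.card_le_card fun x hx => (Finset.mem_filter.1 hx).2
    have h3 : (R.filter (· ∈ Q)).card ≤ Q.card :=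
      Finset.card_le_card fun x hx => (Finset.mem_filter.1 hx).2
    omega
  -- degree sum over V
  have hVdeg : 2 * Fintype.card V + B.card ≤ ∑ v, G.degree v + A.card + Q.card := by
    have h1 : ∑ v : V, (2 + if v ∈ B then 1 else 0) ≤ ∑ v, (G.degree v + (if v ∈ A then 1 else 0) +
        (if v ∈ Q then 1 else 0)) := by
      refine Finset.sum_le_sum fun v _ => ?_
      have h0 := hdeg v
      have hBv : v ∈ B ↔ 3 ≤ G.degree v := by simp [hB]
      by_cases h : G.degree v = 1
      · have hvB : v ∉ B := by rw [hBv]; omega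
        by_cases hvA : v ∈ A
        · simp [hvA, hvB]; omega
        · have : v ∈ Q := Finset.mem_filter.2 ⟨Finset.mem_univ _, h, hvA⟩
          simp [this, hvB]; omega
      · by_cases hvB : v ∈ B
        · have h3 := hBv.1 hvB
          rw [if_pos hvB]; omega
        · rw [if_neg hvB]; omega
    simp only [Finset.sum_add_distrib, Finset.sum_const, smul_eq_mul] at h1
    rw [← Finset.card_filter, ← Finset.card_filter, ← Finset.card_filter] at h1
    simp only [Finset.filter_univ_mem, Finset.card_univ] at h1
    omega
  -- leaves of `Q` have their neighbour in `M`
  have hQnbr : ∀ x ∈ Q, ∃ y ∈ M, G.Adj x y := by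
    intro x hx
    obtain ⟨-, hx1, hxA⟩ := Finset.mem_filter.1 hx
    by_cases hxM : x ∈ M
    · obtain ⟨-, y, hy, -, hxy, -⟩ := hMlow x hxM
      exact ⟨y, hy, hxy⟩
    · have hxR : x ∈ R := Finset.mem_filter.2 ⟨Finset.mem_univ _, by omega, hxM⟩
      obtain ⟨y, hxy⟩ := (G.degree_pos_iff_exists_adj x).1 (hdeg x)
      refine ⟨y, ?_, hxy⟩
      by_contra hyM
      have hy2 : G.degree y ≤ 2 := by
        by_contra hy3
        exact hxA (Finset.mem_filter.2 ⟨Finset.mem_univ _, hx1, y, hxy, by omega⟩)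
      exact hind x hxR y (Finset.mem_filter.2 ⟨Finset.mem_univ _, hy2, hyM⟩) hxy
  -- count of parts
  have hparts : P.parts.card + A.card ≤ B.card + R.card + P2.card := by
    have h1 : (P.parts \ P2).card ≤ (B ∪ (R \ A)).card := by
      have hrep : ∀ b ∈ P.parts \ P2, ∃ v ∈ B ∪ (R \ A), v ∈ b := by
        intro b hb
        obtain ⟨hbP, hb2⟩ := Finset.mem_sdiff.1 hb
        rcases hblocks b hbP with ⟨v, rfl⟩ | h | ⟨v, S, hS, hvS, hSv, hv3, rfl⟩
        · refine ⟨v, ?_, by simp⟩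
          by_cases hv3 : 3 ≤ G.degree v
          · exact Finset.mem_union_left _ (Finset.mem_filter.2 ⟨Finset.mem_univ _, hv3⟩)
          · refine Finset.mem_union_right _ (Finset.mem_sdiff.2 ⟨Finset.mem_filter.2
              ⟨Finset.mem_univ _, by omega, fun hvM => ?_⟩, fun hvA => ?_⟩)
            · obtain ⟨c, hc, hvc⟩ := Finset.mem_biUnion.1 hvM
              have := huniq _ hbP c (Finset.mem_filter.1 hc).1 v (by simp) hvc
              exact hb2 (this ▸ hc)
            · obtain ⟨-, hv1, u, hvu, hu⟩ := Finset.mem_filter.1 hvA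
              obtain ⟨c, hc, huc, hall⟩ := hmax1 u hu ⟨v, hvu.symm, hv1⟩
              have := huniq _ hbP c hc v (by simp) (hall v hvu.symm hv1)
              rw [← this, Finset.mem_singleton] at huc
              exact hvu.ne huc.symm
        · exact absurd (Finset.mem_filter.2 ⟨hbP, h⟩) hb2
        · exact ⟨v, Finset.mem_union_left _ (Finset.mem_filter.2 ⟨Finset.mem_univ _, hv3⟩),
            by simp⟩
      choose! f hf hfb using hrep
      refine Finset.card_le_card_of_injOn f hf ?_
      intro b hb c hc hbc
      refine huniq b (Finset.mem_sdiff.1 hb).1 c (Finset.mem_sdiff.1 hc).1 (f b) (hfb b hb) ?_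
      rw [hbc]; exact hfb c hc
    have h2 : (B ∪ (R \ A)).card ≤ B.card + (R \ A).card := Finset.card_union_le _ _
    have h3 : (R \ A).card + A.card = R.card := Finset.card_sdiff_add_card_eq_card hAR
    have h4 : (P.parts \ P2).card + P2.card = P.parts.card :=
      Finset.card_sdiff_add_card_eq_card (Finset.filter_subset _ _)
    omega
  rcases Finset.eq_empty_or_nonempty B with hB0 | ⟨z, hz⟩
  · -- `T` is a path
    have hlow : ∀ v, G.degree v ≤ 2 := by
      intro v
      by_contra hv
      have : v ∈ B := Finset.mem_filter.2 ⟨Finset.mem_univ _, by omega⟩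
      rw [hB0] at this
      simp at this
    have hA0 : A.card = 0 := by
      rw [Finset.card_eq_zero, Finset.eq_empty_iff_forall_notMem]
      intro x hx
      obtain ⟨-, -, u, -, hu⟩ := Finset.mem_filter.1 hx
      have := hlow u
      omega
    have hBc : B.card = 0 := by rw [hB0]; rfl
    have hQ2 : ∑ v, G.degree v + Q.card ≤ 2 * Fintype.card V := by
      have h1 : ∑ v, (G.degree v + (if v ∈ Q then 1 else 0)) ≤ ∑ v : V, 2 := by
        refine Finset.sum_le_sum fun v _ => ?_
        have h0 := hlow v
        split_ifs with hv
        · have := (Finset.mem_filter.1 hv).2.1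
          omega
        · omega
      simp only [Finset.sum_add_distrib, Finset.sum_const, smul_eq_mul] at h1
      rw [← Finset.card_filter] at h1
      simp only [Finset.filter_univ_mem, Finset.card_univ] at h1
      omega
    have hQpos : 0 < Q.card := by omega
    obtain ⟨x, hx⟩ := Finset.card_pos.1 hQpos
    obtain ⟨y, hy, -⟩ := hQnbr x hx
    have : 0 < M.card := Finset.card_pos.2 ⟨y, hy⟩
    omega
  · have hQm : Q.card ≤ P2.card := by
      have hmap : ∀ x ∈ Q, ∃ b ∈ P2, ∃ y ∈ b, G.Adj x y := by
        intro x hx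
        obtain ⟨y, hy, hxy⟩ := hQnbr x hx
        obtain ⟨b, hb, hyb⟩ := Finset.mem_biUnion.1 hy
        exact ⟨b, hb, y, hyb, hxy⟩
      choose! f hf hfy using hmap
      refine Finset.card_le_card_of_injOn f hf ?_
      intro l hl l' hl' hll
      by_contra hne
      obtain ⟨x, hxb, hlx⟩ := hfy l hl
      obtain ⟨x', hxb', hlx'⟩ := hfy l' hl'
      rw [← hll] at hxb'
      have hl1 := (Finset.mem_filter.1 hl).2.1
      have hl1' := (Finset.mem_filter.1 hl').2.1
      have hbP2 := hf l hl
      have hx2 : G.degree x ≤ 2 := (hMlow x (Finset.mem_biUnion.2 ⟨_, hbP2, hxb⟩)).1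
      have hx2' : G.degree x' ≤ 2 := (hMlow x' (Finset.mem_biUnion.2 ⟨_, hbP2, hxb'⟩)).1
      have hxx : x = x' ∨ G.Adj x x' := by
        obtain ⟨-, u, v, huv, hadj, -, -, hb⟩ := Finset.mem_filter.1 hbP2
        rw [hb] at hxb hxb'
        simp only [Finset.mem_insert, Finset.mem_singleton] at hxb hxb'
        rcases hxb with rfl | rfl <;> rcases hxb' with rfl | rfl
        · exact Or.inl rfl
        · exact Or.inr hadj
        · exact Or.inr hadj.symm
        · exact Or.inl rfl
      have hNl : ∀ c, G.Adj l c → c = x := fun c hc => leaf_unique G (by omega) hc hlx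
      have hNl' : ∀ c, G.Adj l' c → c = x' := fun c hc => leaf_unique G (by omega) hc hlx'
      have hNx : ∀ c, G.Adj x c → c = l ∨ c = l' ∨ c = x' := by
        intro c hc
        rcases hxx with rfl | hxx
        · rcases low_two G hx2 hlx.symm hlx'.symm hne hc with h | h <;> simp [h]
        · by_cases hlx2 : l = x'
          · subst hlx2
            have := hNl l' hlx'.symm
            subst this
            exact Or.inr (Or.inr (hNl' c hc))
          · rcases low_two G hx2 hlx.symm hxx hlx2 hc with h | h <;> simp [h]
      have hNx' : ∀ c, G.Adj x' c → c = l ∨ c = l' ∨ c = x := by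
        intro c hc
        rcases hxx with rfl | hxx
        · rcases low_two G hx2 hlx.symm hlx'.symm hne hc with h | h <;> simp [h]
        · by_cases hlx2 : l' = x
          · subst hlx2
            have := hNl' l hlx.symm
            subst this
            exact Or.inr (Or.inr (hNl c hc))
          · rcases low_two G hx2' hlx'.symm hxx.symm hlx2 hc with h | h <;> simp [h]
      have hzW := closed_univ G hT.1 {l, l', x, x'} l (by simp) (by
        intro a ha b hab
        simp only [Set.mem_insert_iff, Set.mem_singleton_iff] at ha ⊢
        rcases ha with rfl | rfl | rfl | rfl
        · have := hNl b hab; tauto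
        · have := hNl' b hab; tauto
        · have := hNx b hab; tauto
        · have := hNx' b hab; tauto) z
      have hz3 := (Finset.mem_filter.1 hz).2
      simp only [Set.mem_insert_iff, Set.mem_singleton_iff] at hzW
      rcases hzW with rfl | rfl | rfl | rfl <;> omega
    omega
end

section
/- Let T be a tree on N > 4 vertices in which every vertex has degree 1 or degree 3. Then T contains a matching M such that every edge of M has at least one leaf endpoint and 4·|M| ≥ N; that is, at least half of the leaves can simultaneously be matched to their neighbors. -/
open SimpleGraph Finset

theorem exists_nonleaf_nbr {V : Type*} [Fintype V] [DecidableEq V]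
    (G : SimpleGraph V) [DecidableRel G.Adj]
    (hT : G.IsTree) (hN : 4 < Fintype.card V)
    (hdeg : ∀ v : V, G.degree v = 1 ∨ G.degree v = 3) (p : V) :
    ∃ q, G.Adj p q ∧ G.degree q = 3 := by
  by_contra hcon
  have hleaf : ∀ q, G.Adj p q → G.degree q = 1 := by
    intro q hq
    rcases hdeg q with h | h
    · exact h
    · exact absurd ⟨q, hq, h⟩ hcon
  have hclosed : ∀ u v : V, G.Adj u v → (u = p ∨ G.Adj p u) → (v = p ∨ G.Adj p v) := by
    rintro u v huv (rfl | hpu)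
    · exact Or.inr huv
    · left
      have h1 := hleaf u hpu
      rw [← G.card_neighborFinset_eq_degree, Finset.card_eq_one] at h1
      obtain ⟨a, ha⟩ := h1
      have h2 : v ∈ G.neighborFinset u := by simpa using huv
      have h3 : p ∈ G.neighborFinset u := by simpa using hpu.symm
      rw [ha, Finset.mem_singleton] at h2 h3
      rw [h2, h3]
  have hall : ∀ v : V, v = p ∨ G.Adj p v := by
    intro v
    obtain ⟨w⟩ := hT.1.preconnected p v
    have key : ∀ (a b : V), G.Walk a b → (a = p ∨ G.Adj p a) → (b = p ∨ G.Adj p b) := by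
      intro a b w
      induction w with
      | nil => exact id
      | cons h _ ih => exact fun ha => ih (hclosed _ _ h ha)
    exact key p v w (Or.inl rfl)
  have hsub : (Finset.univ : Finset V) ⊆ insert p (G.neighborFinset p) := by
    intro v _
    simpa using hall v
  have h1 := Finset.card_le_card hsub
  have h2 := Finset.card_insert_le p (G.neighborFinset p)
  rw [G.card_neighborFinset_eq_degree] at h2
  rw [Finset.card_univ] at h1
  rcases hdeg p with h | h <;> omega

/-- Let `T` be a tree on `N > 4` vertices in which every vertex has degree
1 or degree 3. Then `T` contains a matching `M` such that every edge of `M` has at least one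
leaf endpoint and `4 * |M| ≥ N`. -/
theorem stmt5 {V : Type*} [Fintype V] [DecidableEq V]
    (G : SimpleGraph V) [DecidableRel G.Adj]
    (hT : G.IsTree) (hN : 4 < Fintype.card V)
    (hdeg : ∀ v : V, G.degree v = 1 ∨ G.degree v = 3) :
    ∃ M : Finset (Sym2 V), ↑M ⊆ G.edgeSet ∧
      (∀ e ∈ M, ∀ f ∈ M, e ≠ f → ∀ v : V, v ∈ e → v ∉ f) ∧
      (∀ e ∈ M, ∃ v ∈ e, G.degree v = 1) ∧
      Fintype.card V ≤ 4 * M.card := by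
  choose f hf hf3 using exists_nonleaf_nbr G hT hN hdeg
  have huniq : ∀ l a b, G.degree l = 1 → G.Adj l a → G.Adj l b → a = b := by
    intro l a b h1 ha hb
    rw [← G.card_neighborFinset_eq_degree, Finset.card_eq_one] at h1
    obtain ⟨c, hc⟩ := h1
    have h2 : a ∈ G.neighborFinset l := by simpa using ha
    have h3 : b ∈ G.neighborFinset l := by simpa using hb
    rw [hc, Finset.mem_singleton] at h2 h3
    rw [h2, h3]
  let L : Finset V := Finset.univ.filter (fun v => G.degree v = 1)
  have hL : ∀ v, v ∈ L ↔ G.degree v = 1 := by intro v; simp [L]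
  let P : Finset V := L.image f
  have hLP : L.card ≤ 2 * P.card := by
    apply Finset.card_le_mul_card_image
    intro p _
    have hsub : L.filter (fun x => f x = p) ⊆ (G.neighborFinset p).erase (f p) := by
      intro x hx
      rw [Finset.mem_filter, hL] at hx
      obtain ⟨hx1, hx2⟩ := hx
      rw [Finset.mem_erase, mem_neighborFinset]
      refine ⟨?_, ?_⟩
      · rintro rfl
        have := hf3 p
        omega
      · have := hf x
        rw [hx2] at this
        exact this.symm
    have h1 := Finset.card_le_card hsub
    rw [Finset.card_erase_of_mem (by simpa using hf p), G.card_neighborFinset_eq_degree] at h1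
    rcases hdeg p with h | h <;> omega
  have hcount : Fintype.card V ≤ 2 * L.card := by
    have hs := G.sum_degrees_eq_twice_card_edges
    have he := hT.card_edgeFinset
    have h1 : ∑ v, (G.degree v + if G.degree v = 1 then 2 else 0) = ∑ _v : V, 3 := by
      apply Finset.sum_congr rfl
      intro v _
      rcases hdeg v with h | h <;> simp [h]
    rw [Finset.sum_add_distrib, ← Finset.sum_filter] at h1
    simp only [Finset.sum_const, smul_eq_mul, Finset.card_univ] at h1
    change _ + L.card * 2 = _ at h1
    omega
  have hg : ∀ p, ∃ l, p ∈ P → G.degree l = 1 ∧ f l = p := by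
    intro p
    by_cases hp : p ∈ P
    · obtain ⟨l, hl, rfl⟩ := Finset.mem_image.1 hp
      exact ⟨l, fun _ => ⟨(hL l).1 hl, rfl⟩⟩
    · exact ⟨p, fun h => absurd h hp⟩
  choose g hg using hg
  have hP3 : ∀ p ∈ P, G.degree p = 3 := by
    intro p hp
    rw [← (hg p hp).2]
    exact hf3 _
  have hmeet : ∀ p ∈ P, ∀ q ∈ P, ∀ v, v ∈ s(p, g p) → v ∈ s(q, g q) → p = q := by
    intro p hp q hq v hv hw
    have hp3 := hP3 p hp
    have hq3 := hP3 q hq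
    obtain ⟨hp1, hp2⟩ := hg p hp
    obtain ⟨hq1, hq2⟩ := hg q hq
    rw [Sym2.mem_iff] at hv hw
    rcases hv with h | h <;> rcases hw with h' | h'
    · rw [← h, h']
    · rw [← h, h'] at hp3; omega
    · rw [← h', h] at hq3; omega
    · rw [← hp2, ← hq2, ← h, h']
  refine ⟨P.image (fun p => s(p, g p)), ?_, ?_, ?_, ?_⟩
  · intro e he
    rw [Finset.mem_coe, Finset.mem_image] at he
    obtain ⟨p, hp, rfl⟩ := he
    rw [mem_edgeSet]
    have := hf (g p)
    rw [(hg p hp).2] at this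
    exact this.symm
  · intro e he e' he' hne v hv hv'
    obtain ⟨p, hp, rfl⟩ := Finset.mem_image.1 he
    obtain ⟨q, hq, rfl⟩ := Finset.mem_image.1 he'
    apply hne
    rw [hmeet p hp q hq v hv hv']
  · intro e he
    obtain ⟨p, hp, rfl⟩ := Finset.mem_image.1 he
    exact ⟨g p, Sym2.mem_mk_right _ _, (hg p hp).1⟩
  · rw [Finset.card_image_of_injOn]
    · omega
    · intro p hp q hq h
      refine hmeet p hp q hq p (Sym2.mem_mk_left _ _) ?_
      have h' : s(p, g p) = s(q, g q) := h
      rw [← h']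
      exact Sym2.mem_mk_left _ _
end

section
/- Let T be a tree containing at least one vertex of degree at least 3. Then the number of vertices of degree 2 both of whose neighbors have degree at least 3 is at most one less than the number of vertices of degree at least 3. -/
open SimpleGraph Finset

lemma parent_unique_aux {V : Type*} (G : SimpleGraph V) (hT : G.IsTree) (r v v' w : V)
    (h : G.Adj v w) (h' : G.Adj v' w) (hd : G.dist r w = G.dist r v + 1)
    (hd' : G.dist r w = G.dist r v' + 1) : v = v' := by
  obtain ⟨p, hp⟩ := hT.1.exists_walk_length_eq_dist r v
  obtain ⟨q, hq⟩ := hT.1.exists_walk_length_eq_dist r v'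
  have h1 : (p.concat h).IsPath := by
    apply Walk.isPath_of_length_eq_dist
    rw [Walk.length_concat, hp, hd]
  have h2 : (q.concat h').IsPath := by
    apply Walk.isPath_of_length_eq_dist
    rw [Walk.length_concat, hq, hd']
  have h3 := (hT.existsUnique_path r w).unique h1 h2
  have h4 := congrArg Walk.penultimate h3
  simpa using h4

/-- Let `T` be a tree containing at least one vertex of degree at least 3.
Then the number of vertices of degree 2 both of whose neighbors have degree at least 3 is at
most one less than the number of vertices of degree at least 3. -/
theorem stmt6 {V : Type*} [Fintype V] [DecidableEq V]
    (G : SimpleGraph V) [DecidableRel G.Adj]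
    (hT : G.IsTree) (hex : ∃ v : V, 3 ≤ G.degree v) :
    {v : V | G.degree v = 2 ∧ ∀ u : V, G.Adj v u → 3 ≤ G.degree u}.ncard + 1 ≤
      {v : V | 3 ≤ G.degree v}.ncard := by
  obtain ⟨r, hr⟩ := hex
  have key : ∀ v : V, ∃ w, G.degree v = 2 → G.Adj v w ∧ G.dist r w = G.dist r v + 1 := by
    intro v
    by_cases hv : G.degree v = 2
    · rw [← G.card_neighborFinset_eq_degree, Finset.card_eq_two] at hv
      obtain ⟨a, b, hab, hs⟩ := hv
      have ha : G.Adj v a := by rw [← mem_neighborFinset, hs]; simp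
      have hb : G.Adj v b := by rw [← mem_neighborFinset, hs]; simp
      rcases hT.dist_eq_dist_add_one_of_adj r ha with h1 | h1
      · rcases hT.dist_eq_dist_add_one_of_adj r hb with h2 | h2
        · exact absurd (parent_unique_aux G hT r a b v ha.symm hb.symm h1 h2) hab
        · exact ⟨b, fun _ => ⟨hb, h2⟩⟩
      · exact ⟨a, fun _ => ⟨ha, h1⟩⟩
    · exact ⟨v, fun h => absurd h hv⟩
  choose f hf using key
  have hrm : r ∈ {v : V | 3 ≤ G.degree v} := hr
  rw [← Set.ncard_sdiff_singleton_add_one hrm (Set.toFinite _)]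
  apply Nat.add_le_add_right
  apply Set.ncard_le_ncard_of_injOn f _ _ (Set.toFinite _)
  · rintro v ⟨hv, hn⟩
    obtain ⟨h1, h2⟩ := hf v hv
    refine ⟨hn _ h1, ?_⟩
    intro h
    rw [Set.mem_singleton_iff.1 h] at h2
    simp at h2
  · rintro v ⟨hv, -⟩ v' ⟨hv', -⟩ he
    obtain ⟨h1, h2⟩ := hf v hv
    obtain ⟨h1', h2'⟩ := hf v' hv'
    rw [← he] at h1' h2'
    exact parent_unique_aux G hT r v v' _ h1 h1' h2 h2'
end

section
/- Let T be a tree on N vertices. Then the number of vertices of degree 2 both of whose neighbors have degree at least 3 is strictly less than N/3. -/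
open SimpleGraph Finset

theorem parent_unique {V : Type*} (G : SimpleGraph V) (hT : G.IsTree) (r v a b : V)
    (ha : G.Adj v a) (hb : G.Adj v b) (hda : G.dist v r = G.dist a r + 1)
    (hdb : G.dist v r = G.dist b r + 1) : a = b := by
  obtain ⟨p, hp⟩ := hT.1.exists_walk_length_eq_dist a r
  obtain ⟨q, hq⟩ := hT.1.exists_walk_length_eq_dist b r
  have h1 : (Walk.cons ha p).IsPath := by
    apply Walk.isPath_of_length_eq_dist
    rw [Walk.length_cons, hp, hda]
  have h2 : (Walk.cons hb q).IsPath := by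
    apply Walk.isPath_of_length_eq_dist
    rw [Walk.length_cons, hq, hdb]
  have h := (hT.existsUnique_path v r).unique h1 h2
  have h3 := congrArg Walk.snd h
  simpa using h3

/-- Let `T` be a tree on `N` vertices. Then the number of vertices of
degree 2 both of whose neighbors have degree at least 3 is strictly less than `N / 3`. -/
theorem stmt7 {V : Type*} [Fintype V] [DecidableEq V]
    (G : SimpleGraph V) [DecidableRel G.Adj]
    (hT : G.IsTree) :
    3 * {v : V | G.degree v = 2 ∧ ∀ u : V, G.Adj v u → 3 ≤ G.degree u}.ncard <
      Fintype.card V := by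
  classical
  set S : Finset V := univ.filter
    (fun v => G.degree v = 2 ∧ ∀ u : V, G.Adj v u → 3 ≤ G.degree u) with hS
  have hSc : {v : V | G.degree v = 2 ∧ ∀ u : V, G.Adj v u → 3 ≤ G.degree u}.ncard = #S := by
    rw [← Set.ncard_coe_finset]
    congr 1
    ext v
    simp [hS]
  rw [hSc]
  have hne : Nonempty V := hT.1.nonempty
  rcases S.eq_empty_or_nonempty with h0 | ⟨s, hs⟩
  · rw [h0]
    simpa using Fintype.card_pos
  have memS : ∀ v, v ∈ S ↔ (G.degree v = 2 ∧ ∀ u : V, G.Adj v u → 3 ≤ G.degree u) := by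
    intro v; simp [hS]
  set B : Finset V := univ.filter (fun v => 3 ≤ G.degree v) with hB
  have memB : ∀ v, v ∈ B ↔ 3 ≤ G.degree v := by intro v; simp [hB]
  obtain ⟨hs2, hsn⟩ := (memS s).1 hs
  obtain ⟨r, hr⟩ : ∃ r, G.Adj s r := (G.degree_pos_iff_exists_adj s).1 (by omega)
  have hrB : 3 ≤ G.degree r := hsn r hr
  have hnt : Nontrivial V := ⟨s, r, hr.ne⟩
  have hchild : ∀ v, v ∈ S → ∃ c, G.Adj v c ∧ G.dist c r = G.dist v r + 1 := by
    intro v hv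
    obtain ⟨hv2, _⟩ := (memS v).1 hv
    rw [← G.card_neighborFinset_eq_degree, Finset.card_eq_two] at hv2
    obtain ⟨a, b, hab, hN⟩ := hv2
    have ha : G.Adj v a := by rw [← G.mem_neighborFinset, hN]; simp
    have hb : G.Adj v b := by rw [← G.mem_neighborFinset, hN]; simp
    have h1 := hT.dist_eq_dist_add_one_of_adj r ha
    have h2 := hT.dist_eq_dist_add_one_of_adj r hb
    rw [G.dist_comm (u := r) (v := v), G.dist_comm (u := r) (v := a)] at h1
    rw [G.dist_comm (u := r) (v := v), G.dist_comm (u := r) (v := b)] at h2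
    by_contra! hcon
    have h3 := hcon a ha
    have h4 := hcon b hb
    exact hab (parent_unique G hT r v a b ha hb (by omega) (by omega))
  choose! f hf1 hf2 using hchild
  have hk : #S ≤ #(B.erase r) := by
    apply Finset.card_le_card_of_injOn f
    · intro v hv
      have hv : v ∈ S := hv
      have : f v ∈ B.erase r := by
        rw [Finset.mem_erase, memB]
        refine ⟨fun h => ?_, ((memS v).1 hv).2 _ (hf1 v hv)⟩
        have := hf2 v hv
        rw [h, SimpleGraph.dist_self] at this
        omega
      exact this
    · intro v hv w hw h
      have hv : v ∈ S := hv
      have hw : w ∈ S := hw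
      have h1 := hf1 v hv
      have h2 := hf2 v hv
      rw [h] at h1 h2
      exact parent_unique G hT r (f w) v w h1.symm (hf1 w hw).symm h2 (hf2 w hw)
  rw [Finset.card_erase_of_mem ((memB r).2 hrB)] at hk
  have hBpos : 0 < #B := Finset.card_pos.2 ⟨r, (memB r).2 hrB⟩
  have hsum := G.sum_degrees_eq_twice_card_edges
  have hE := hT.card_edgeFinset
  have hle : ∑ v : V, (1 + (if v ∈ S then 1 else 0) + 2 * (if v ∈ B then 1 else 0))
      ≤ ∑ v : V, G.degree v := by
    apply Finset.sum_le_sum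
    intro v _
    have hpos := hT.1.preconnected.degree_pos_of_nontrivial v
    have h1 := memS v
    have h2 := memB v
    split_ifs with h3 h4 h4
    · have := (h1.1 h3).1; have := h2.1 h4; omega
    · have := (h1.1 h3).1; omega
    · have := h2.1 h4; omega
    · omega
  rw [Finset.sum_add_distrib, Finset.sum_add_distrib, ← Finset.mul_sum] at hle
  simp only [Finset.sum_boole, Finset.sum_const, Finset.card_univ,
    smul_eq_mul, mul_one, Finset.filter_univ_mem, Nat.cast_id] at hle
  omega
end
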